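/- arXiv:math/0507156 — 2 statements merged into one kernel-verified Lean document; each statement's English description precedes it below -/
import Mathlib

section
/- Let m ≥ 2 be an integer and let (a_α)_{|α| ≤ m−1} be complex numbers with a_{g₀} real and a_{g₀} ≥ 0. Set p(S) := ∑_{|α| ≤ m−1} a_α S_α, a bounded operator on ℓ²(𝔽ₙ⁺). If Re p(S) ≤ I, then ∑_{|α| ≤ m−1} |a_α| r_α ≤ 1 for every tuple r = (r₁,…,rₙ) of nonnegative reals with ‖r‖₂ ≤ t_m. -/
open scoped BigOperators

/-- The full Fock space, identified with `ℓ²(𝔽ₙ⁺)` where the free monoid `𝔽ₙ⁺` on `n`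
generators is identified with `List (Fin n)`. -/
noncomputable abbrev Fock (n : ℕ) : Type := lp (fun _ : List (Fin n) => ℂ) 2

/-- The orthonormal basis vector `e_α` of the Fock space. -/
noncomputable def fockBasis (n : ℕ) (α : List (Fin n)) : Fock n := lp.single 2 α 1

/-- For a word `α = g_{i₁} ⋯ g_{i_k}`, the product `T_α = T_{i₁} ⋯ T_{i_k}` (and `T_{g₀} = 1`). -/
noncomputable def wordProd {n : ℕ} {M : Type*} [Monoid M] (T : Fin n → M)
    (α : List (Fin n)) : M :=
  (α.map T).prod

/-- `fm m t = ∑_{k=1}^{m-1} t^k * cos (π / (⌊(m-1)/k⌋ + 2))`. -/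
noncomputable def fm (m : ℕ) (t : ℝ) : ℝ :=
  ∑ k ∈ Finset.Icc 1 (m - 1), t ^ k * Real.cos (Real.pi / (((m - 1) / k + 2 : ℕ) : ℝ))


lemma fej_node (M : ℕ) (hM : 2 ≤ M) (l : ℕ) (hl : l < M) :
    Real.cos (Real.pi * (2 * l + 1) / M) ≤ Real.cos (Real.pi / M) := by
  have hM0 : (0:ℝ) < M := by positivity
  have hpi := Real.pi_pos
  have hl' : (l:ℝ) + 1 ≤ M := by exact_mod_cast hl
  have h1 : Real.pi / M ≤ Real.pi * (2 * l + 1) / M := by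
    gcongr
    have : (0:ℝ) ≤ l := by positivity
    nlinarith
  by_cases h : Real.pi * (2 * l + 1) / M ≤ Real.pi
  · exact Real.cos_le_cos_of_nonneg_of_le_pi (by positivity) h h1
  · rw [← Real.cos_two_pi_sub (Real.pi * (2 * l + 1) / M)]
    apply Real.cos_le_cos_of_nonneg_of_le_pi (by positivity) (by linarith)
    have : Real.pi / M + Real.pi * (2 * l + 1) / M ≤ 2 * Real.pi := by
      rw [← add_div, div_le_iff₀ hM0]
      nlinarith
    linarith

noncomputable def fejz (M : ℕ) (l : ℕ) : ℂ := Complex.exp ((Real.pi * (2 * l + 1) / M : ℝ) * Complex.I)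

lemma fejz_norm (M l : ℕ) : ‖fejz M l‖ = 1 := Complex.norm_exp_ofReal_mul_I _

lemma fejz_re (M l : ℕ) : (fejz M l).re = Real.cos (Real.pi * (2 * l + 1) / M) :=
  Complex.exp_ofReal_mul_I_re _

lemma fejz_sum (M : ℕ) (s : ℕ) (hs : 0 < s) (hsM : s < M) :
    ∑ l ∈ Finset.range M, fejz M l ^ s = 0 := by
  have hM : M ≠ 0 := by omega
  have hMc : (M : ℂ) ≠ 0 := by exact_mod_cast hM
  set ζ : ℂ := Complex.exp (2 * Real.pi * Complex.I / M) with hζ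
  have hp : IsPrimitiveRoot ζ M := Complex.isPrimitiveRoot_exp M hM
  have hterm : ∀ l, fejz M l ^ s = (fejz M 0) ^ s * (ζ ^ s) ^ l := by
    intro l
    have : fejz M l = fejz M 0 * ζ ^ l := by
      rw [hζ, fejz, fejz, ← Complex.exp_nat_mul, ← Complex.exp_add]
      congr 1
      push_cast
      field_simp
      ring
    rw [this, mul_pow, ← pow_mul, ← pow_mul, mul_comm l s]
  rw [Finset.sum_congr rfl fun l _ => hterm l, ← Finset.mul_sum]
  have hne : ζ ^ s ≠ 1 := hp.pow_ne_one_of_pos_of_lt (by omega) hsM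
  have : ∑ l ∈ Finset.range M, (ζ ^ s) ^ l = 0 := by
    rw [geom_sum_eq hne, ← pow_mul, mul_comm, pow_mul, hp.pow_eq_one]
    simp
  rw [this, mul_zero]

lemma fejz_sum_re (M : ℕ) (s : ℕ) (hs : 0 < s) (hsM : s < M) (A : ℂ) :
    ∑ l ∈ Finset.range M, (A * fejz M l ^ s).re = 0 := by
  rw [← Complex.re_sum, ← Finset.mul_sum, fejz_sum M s hs hsM]; simp

lemma fej_prod (M : ℕ) (s : ℕ) (hsM : s + 1 < M) (A : ℂ) :
    ∑ l ∈ Finset.range M, (fejz M l).re * (A * fejz M l ^ s).re =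
      if s = 1 then M / 2 * A.re else 0 := by
  rcases s with _ | s
  · have := fejz_sum_re M 1 (by omega) (by omega) 1
    simp only [one_mul, pow_one] at this
    simp [← Finset.sum_mul, this]
  · have key : ∀ l, (fejz M l).re * (A * fejz M l ^ (s+1)).re =
        ((A * fejz M l ^ (s+2)).re + (A * fejz M l ^ s).re) / 2 := by
      intro l
      have hn : (fejz M l).re * (fejz M l).re + (fejz M l).im * (fejz M l).im = 1 := by
        have := Complex.normSq_eq_norm_sq (fejz M l)
        rw [fejz_norm] at this
        rw [← Complex.normSq_apply, this]; norm_num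
      have e1 : A * fejz M l ^ (s+1) = (A * fejz M l ^ s) * fejz M l := by ring
      have e2 : A * fejz M l ^ (s+2) = (A * fejz M l ^ s) * fejz M l * fejz M l := by ring
      rw [e1, e2]
      generalize A * fejz M l ^ s = w
      generalize fejz M l = z at *
      simp only [Complex.mul_re, Complex.mul_im]
      linear_combination (w.re / 2) * hn
    simp_rw [key]
    rw [← Finset.sum_div, Finset.sum_add_distrib, fejz_sum_re M (s+2) (by omega) (by omega)]
    rcases s with _ | s
    · simp; ring
    · rw [fejz_sum_re M (s+1) (by omega) (by omega)]; simp

lemma fejer (N : ℕ) (hN : 1 ≤ N) (A : ℕ → ℂ)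
    (hA : ∀ z : ℂ, ‖z‖ = 1 → (∑ s ∈ Finset.range (N+1), A s * z ^ s).re ≤ 1) :
    -(A 1).re ≤ 2 * (1 - (A 0).re) * Real.cos (Real.pi / ((N + 2 : ℕ) : ℝ)) := by
  set M := N + 2 with hM
  set C := Real.cos (Real.pi / (M:ℝ)) with hC
  have hpos : 0 ≤ ∑ l ∈ Finset.range M, (C - (fejz M l).re) *
      (1 - (∑ s ∈ Finset.range (N+1), A s * fejz M l ^ s).re) := by
    apply Finset.sum_nonneg
    intro l hl
    apply mul_nonneg
    · rw [fejz_re]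
      have := fej_node M (by omega) l (Finset.mem_range.1 hl)
      linarith
    · have := hA _ (fejz_norm M l); linarith
  have e : ∑ l ∈ Finset.range M, (C - (fejz M l).re) *
      (1 - (∑ s ∈ Finset.range (N+1), A s * fejz M l ^ s).re) =
      M * C - ∑ l ∈ Finset.range M, (fejz M l).re
      - C * ∑ s ∈ Finset.range (N+1), ∑ l ∈ Finset.range M, (A s * fejz M l ^ s).re
      + ∑ s ∈ Finset.range (N+1), ∑ l ∈ Finset.range M, (fejz M l).re * (A s * fejz M l ^ s).re := by
    rw [Finset.sum_comm (s := Finset.range (N+1)), Finset.sum_comm (s := Finset.range (N+1)),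
      Finset.mul_sum]
    have : (M:ℝ) * C = ∑ l ∈ Finset.range M, C := by simp
    rw [this, ← Finset.sum_sub_distrib, ← Finset.sum_sub_distrib, ← Finset.sum_add_distrib]
    refine Finset.sum_congr rfl fun l _ => ?_
    rw [← Finset.mul_sum, Complex.re_sum]
    ring
  rw [e] at hpos
  have h1 : ∑ l ∈ Finset.range M, (fejz M l).re = 0 := by
    have := fejz_sum_re M 1 (by omega) (by omega) 1
    simpa using this
  have h2 : ∑ s ∈ Finset.range (N+1), ∑ l ∈ Finset.range M, (A s * fejz M l ^ s).re
      = M * (A 0).re := by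
    rw [Finset.sum_eq_single 0]
    · simp
    · intro s hs h0
      exact fejz_sum_re M s (by omega) (by have := Finset.mem_range.1 hs; omega) _
    · simp
  have h3 : ∑ s ∈ Finset.range (N+1), ∑ l ∈ Finset.range M,
      (fejz M l).re * (A s * fejz M l ^ s).re = M / 2 * (A 1).re := by
    rw [Finset.sum_congr rfl fun s hs => fej_prod M s
      (by have := Finset.mem_range.1 hs; omega) (A s)]
    rw [Finset.sum_ite_eq' ]
    simp; omega
  rw [h1, h2, h3] at hpos
  have hM0 : (0:ℝ) < M := by positivity
  have : 0 ≤ (M:ℝ) * (2 * (1 - (A 0).re) * C + (A 1).re) := by linarith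
  have := nonneg_of_mul_nonneg_right this hM0
  linarith

/-- Toeplitz version. -/
lemma toep_sum (N L : ℕ) (hL : N + 1 ≤ L) (A : ℕ → ℂ) (hA0 : ∀ s, N < s → A s = 0) (z : ℂ) :
    ∑ j ∈ Finset.range L, ∑ i ∈ Finset.range L,
      (if j ≤ i then A (i - j) * z ^ (i - j) else 0) =
    ∑ s ∈ Finset.range (N+1), ((L : ℂ) - s) * (A s * z ^ s) := by
  have h : ∀ j ∈ Finset.range L, ∑ i ∈ Finset.range L,
      (if j ≤ i then A (i - j) * z ^ (i - j) else 0) =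
      ∑ s ∈ Finset.range (N+1), if j + s < L then A s * z ^ s else 0 := by
    intro j hj
    have hj := Finset.mem_range.1 hj
    rw [← Finset.sum_filter, ← Finset.sum_filter]
    symm
    apply Finset.sum_of_injOn (fun s => j + s)
    · intro a _ b _ h; simpa using h
    · intro s hs; simp at hs ⊢; omega
    · intro i hi hni
      simp at hi hni
      have : N < i - j := by
        by_contra hcon
        exact hni (i - j) (by omega) (by omega) (by omega)
      rw [hA0 _ this]; simp
    · intro s hs; simp
  rw [Finset.sum_congr rfl h, Finset.sum_comm]
  refine Finset.sum_congr rfl fun s hs => ?_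
  have hs := Finset.mem_range.1 hs
  rw [← Finset.sum_filter, Finset.sum_const, nsmul_eq_mul]
  congr 1
  have : (Finset.range L).filter (fun j => j + s < L) = Finset.range (L - s) := by
    ext j; simp; omega
  rw [this, Finset.card_range, Nat.cast_sub (by omega)]

lemma toep_limit (N : ℕ) (A : ℕ → ℂ) (z : ℂ)
    (h : ∀ L : ℕ, N + 1 ≤ L → (∑ s ∈ Finset.range (N+1), ((L : ℂ) - s) * (A s * z ^ s)).re ≤ L) :
    (∑ s ∈ Finset.range (N+1), A s * z ^ s).re ≤ 1 := by
  set P := (∑ s ∈ Finset.range (N+1), A s * z ^ s).re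
  set K := (∑ s ∈ Finset.range (N+1), (s:ℂ) * (A s * z ^ s)).re
  have h' : ∀ L : ℕ, N + 1 ≤ L → (L:ℝ) * (P - 1) ≤ K := by
    intro L hL
    have := h L hL
    simp_rw [sub_mul] at this
    rw [Finset.sum_sub_distrib, ← Finset.mul_sum, Complex.sub_re, Complex.mul_re,
      Complex.natCast_re, Complex.natCast_im, zero_mul, sub_zero] at this
    linarith
  by_contra hcon
  push Not at hcon
  obtain ⟨n, hn⟩ := exists_nat_gt (K / (P - 1))
  rw [div_lt_iff₀ (by linarith)] at hn
  have := h' (n + N + 1) (by omega)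
  push_cast at this
  have : (0:ℝ) ≤ (N + 1) * (P - 1) := mul_nonneg (by positivity) (by linarith)
  linarith

lemma fock_coord (n : ℕ) (α : List (Fin n)) (x : Fock n) :
    inner ℂ (fockBasis n α) x = x α := by
  rw [fockBasis, lp.inner_single_left]; simp

lemma fock_inner (n : ℕ) (α β : List (Fin n)) :
    inner ℂ (fockBasis n α) (fockBasis n β) = if α = β then (1:ℂ) else 0 := by
  rw [fock_coord, fockBasis, lp.single_apply, Pi.single_apply]

lemma fock_ext (n : ℕ) (x y : Fock n)
    (h : ∀ α, inner ℂ (fockBasis n α) x = inner ℂ (fockBasis n α) y) : x = y := by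
  apply lp.ext
  funext α
  rw [← fock_coord, ← fock_coord, h]

lemma fock_clm_ext (n : ℕ) (T U : Fock n →L[ℂ] Fock n)
    (h : ∀ α, T (fockBasis n α) = U (fockBasis n α)) : T = U := by
  refine lp.ext_continuousLinearMap (ENNReal.ofNat_ne_top (n := nat_lit 2)) fun α => ?_
  ext1
  simpa [fockBasis] using h α

/-- vectors of degree d -/
def fdeg (n : ℕ) (d : ℕ) (x : Fock n) : Prop :=
  ∀ α : List (Fin n), α.length ≠ d → inner ℂ (fockBasis n α) x = (0:ℂ)

lemma fdeg_orth (n : ℕ) (d d' : ℕ) (hd : d ≠ d') (x y : Fock n) (hx : fdeg n d x)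
    (hy : fdeg n d' y) : inner ℂ x y = (0:ℂ) := by
  rw [lp.inner_eq_tsum]
  convert tsum_zero with α
  by_cases h : α.length = d
  · have := hy α (by omega)
    rw [fock_coord] at this
    rw [this]; simp
  · have := hx α h
    rw [fock_coord] at this
    rw [this]; simp

section
variable {n : ℕ} {S : Fin n → Fock n →L[ℂ] Fock n}

lemma S_adj (hS : ∀ (i : Fin n) (α : List (Fin n)), S i (fockBasis n α) = fockBasis n (i :: α))
    (i j : Fin n) (x y : Fock n) :
    inner ℂ (S i x) (S j y) = if i = j then inner ℂ x y else (0:ℂ) := by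
  have : (ContinuousLinearMap.adjoint (S i)) ∘L (S j) =
      if i = j then ContinuousLinearMap.id ℂ (Fock n) else 0 := by
    apply fock_clm_ext
    intro β
    apply fock_ext
    intro α
    rw [ContinuousLinearMap.comp_apply, ContinuousLinearMap.adjoint_inner_right, hS, hS,
      fock_inner]
    by_cases h1 : i = j <;> by_cases h2 : α = β <;>
      simp [h1, h2, fock_inner, -inner_self_eq_norm_sq_to_K]
  rw [← ContinuousLinearMap.adjoint_inner_right, ← ContinuousLinearMap.comp_apply, this]
  split_ifs <;> simp

lemma S_nil (hS : ∀ (i : Fin n) (α : List (Fin n)), S i (fockBasis n α) = fockBasis n (i :: α))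
    (i : Fin n) (x : Fock n) :
    inner ℂ (fockBasis n []) (S i x) = (0:ℂ) := by
  have : ContinuousLinearMap.adjoint (S i) (fockBasis n []) = 0 := by
    apply fock_ext
    intro α
    rw [ContinuousLinearMap.adjoint_inner_right, hS, fock_inner]
    simp
  rw [← ContinuousLinearMap.adjoint_inner_left, this]; simp

lemma S_deg (hS : ∀ (i : Fin n) (α : List (Fin n)), S i (fockBasis n α) = fockBasis n (i :: α))
    (i : Fin n) (d : ℕ) (x : Fock n) (hx : fdeg n d x) : fdeg n (d+1) (S i x) := by
  intro α hα
  rcases α with _ | ⟨j, γ⟩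
  · exact S_nil hS i x
  · rw [← hS, S_adj hS]
    split_ifs
    · exact hx γ (by simpa using hα)
    · rfl

lemma word_deg (hS : ∀ (i : Fin n) (α : List (Fin n)), S i (fockBasis n α) = fockBasis n (i :: α))
    (w : List (Fin n)) (d : ℕ) (x : Fock n) (hx : fdeg n d x) :
    fdeg n (d + w.length) (wordProd S w x) := by
  induction w with
  | nil => simpa [wordProd] using hx
  | cons i w ih =>
    have := S_deg hS i _ _ ih
    simpa [wordProd, add_assoc] using this

lemma word_adj (hS : ∀ (i : Fin n) (α : List (Fin n)), S i (fockBasis n α) = fockBasis n (i :: α))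
    (w w' : List (Fin n)) (hw : w.length = w'.length) (x y : Fock n) :
    inner ℂ (wordProd S w x) (wordProd S w' y) = if w = w' then inner ℂ x y else (0:ℂ) := by
  induction w generalizing w' with
  | nil =>
    have : w' = [] := List.length_eq_zero_iff.1 (by simpa using hw.symm)
    subst this
    simp [wordProd]
  | cons i w ih =>
    rcases w' with _ | ⟨j, w'⟩
    · simp at hw
    · have := ih w' (by simpa using hw)
      simp only [wordProd, List.map_cons, List.prod_cons, ContinuousLinearMap.mul_apply] at this ⊢
      rw [S_adj hS, this]
      by_cases h1 : i = j <;> by_cases h2 : w = w' <;> simp [h1, h2]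

variable (S) in
/-- homogeneous operators -/
noncomputable def hom (d : ℕ) : Submodule ℂ (Fock n →L[ℂ] Fock n) :=
  Submodule.span ℂ {T | ∃ w : List (Fin n), w.length = d ∧ T = wordProd S w}

lemma hom_deg (hS : ∀ (i : Fin n) (α : List (Fin n)), S i (fockBasis n α) = fockBasis n (i :: α))
    {e : ℕ} {T : Fock n →L[ℂ] Fock n} (hT : T ∈ hom S e)
    (d : ℕ) (x : Fock n) (hx : fdeg n d x) : fdeg n (d + e) (T x) := by
  induction hT using Submodule.span_induction with
  | mem T h => obtain ⟨w, rfl, rfl⟩ := h; exact word_deg hS w d x hx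
  | zero => intro α _; simp
  | add T U _ _ h1 h2 =>
    intro α hα
    rw [ContinuousLinearMap.add_apply, inner_add_right, h1 α hα, h2 α hα, add_zero]
  | smul c T _ h =>
    intro α hα
    rw [ContinuousLinearMap.smul_apply, inner_smul_right, h α hα, mul_zero]

lemma hom_adj (hS : ∀ (i : Fin n) (α : List (Fin n)), S i (fockBasis n α) = fockBasis n (i :: α))
    {d : ℕ} {T U : Fock n →L[ℂ] Fock n} (hT : T ∈ hom S d) (hU : U ∈ hom S d) :
    ∃ c : ℂ, ∀ x y, inner ℂ (T x) (U y) = c * inner ℂ x y := by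
  induction hT using Submodule.span_induction with
  | mem T h =>
    obtain ⟨w, hw, rfl⟩ := h
    induction hU using Submodule.span_induction with
    | mem U h =>
      obtain ⟨w', hw', rfl⟩ := h
      refine ⟨if w = w' then 1 else 0, fun x y => ?_⟩
      rw [word_adj hS _ _ (hw.trans hw'.symm)]
      split_ifs <;> simp
    | zero => exact ⟨0, by simp⟩
    | add T U _ _ h1 h2 =>
      obtain ⟨c1, h1⟩ := h1
      obtain ⟨c2, h2⟩ := h2
      exact ⟨c1 + c2, fun x y => by
        rw [ContinuousLinearMap.add_apply, inner_add_right, h1, h2, add_mul]⟩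
    | smul c T _ h =>
      obtain ⟨c1, h⟩ := h
      exact ⟨c * c1, fun x y => by
        rw [ContinuousLinearMap.smul_apply, inner_smul_right, h, mul_assoc]⟩
  | zero => exact ⟨0, by simp⟩
  | add T U _ _ h1 h2 =>
    obtain ⟨c1, h1⟩ := h1
    obtain ⟨c2, h2⟩ := h2
    exact ⟨c1 + c2, fun x y => by
      rw [ContinuousLinearMap.add_apply, inner_add_left, h1, h2, add_mul]⟩
  | smul c T _ h =>
    obtain ⟨c1, h⟩ := h
    exact ⟨starRingEnd ℂ c * c1, fun x y => by
      rw [ContinuousLinearMap.smul_apply, inner_smul_left, h, mul_assoc]⟩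

lemma hom_mul {d e : ℕ} {T U : Fock n →L[ℂ] Fock n} (hT : T ∈ hom S d) (hU : U ∈ hom S e) :
    T * U ∈ hom S (d + e) := by
  induction hT using Submodule.span_induction with
  | mem T h =>
    obtain ⟨w, hw, rfl⟩ := h
    induction hU using Submodule.span_induction with
    | mem U h =>
      obtain ⟨w', hw', rfl⟩ := h
      exact Submodule.subset_span ⟨w ++ w', by simp [hw, hw'], by simp [wordProd]⟩
    | zero => simp
    | add T U _ _ h1 h2 => rw [mul_add]; exact add_mem h1 h2
    | smul c T _ h => rw [mul_smul_comm]; exact Submodule.smul_mem _ _ h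
  | zero => simp
  | add T U _ _ h1 h2 => rw [add_mul]; exact add_mem h1 h2
  | smul c T _ h => rw [smul_mul_assoc]; exact Submodule.smul_mem _ _ h

lemma hom_pow {d : ℕ} {T : Fock n →L[ℂ] Fock n} (hT : T ∈ hom S d) (s : ℕ) :
    T ^ s ∈ hom S (s * d) := by
  induction s with
  | zero => exact Submodule.subset_span ⟨[], by simp, by simp [wordProd]⟩
  | succ s ih =>
    rw [pow_succ, add_mul, one_mul]
    exact hom_mul ih hT

variable (S) in
/-- The homogeneous operator with coefficients b. -/
noncomputable def hop (k : ℕ) (b : (Fin k → Fin n) → ℂ) : Fock n →L[ℂ] Fock n :=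
  ∑ w : Fin k → Fin n, b w • wordProd S (List.ofFn w)

lemma hop_mem (k : ℕ) (b : (Fin k → Fin n) → ℂ) : hop S k b ∈ hom S k :=
  Submodule.sum_mem _ fun w _ => Submodule.smul_mem _ _ (Submodule.subset_span ⟨_, by simp, rfl⟩)

lemma hop_adj (hS : ∀ (i : Fin n) (α : List (Fin n)), S i (fockBasis n α) = fockBasis n (i :: α))
    (k : ℕ) (b c : (Fin k → Fin n) → ℂ) (x y : Fock n) :
    inner ℂ (hop S k b x) (hop S k c y) =
      (∑ w, starRingEnd ℂ (b w) * c w) * inner ℂ x y := by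
  simp only [hop, ContinuousLinearMap.sum_apply, ContinuousLinearMap.smul_apply, sum_inner,
    inner_sum, inner_smul_left, inner_smul_right]
  rw [Finset.sum_mul]
  refine Finset.sum_congr rfl fun w _ => ?_
  rw [Finset.sum_eq_single w]
  · rw [word_adj hS _ _ rfl, if_pos rfl]; ring
  · intro w' _ hne
    rw [word_adj hS _ _ (by simp), if_neg]
    · simp
    · intro h; first | exact hne (List.ofFn_injective h).symm | exact hne (List.ofFn_injective h)
  · simp

lemma coef_bound
    (hS : ∀ (i : Fin n) (α : List (Fin n)), S i (fockBasis n α) = fockBasis n (i :: α))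
    (m : ℕ) (a : ∀ k : ℕ, (Fin k → Fin n) → ℂ) (a0 : ℂ) (ha0 : ∀ w, a 0 w = a0)
    (p : Fock n →L[ℂ] Fock n) (hp : p = ∑ k ∈ Finset.range m, hop S k (a k))
    (hre : ∀ x : Fock n, (inner ℂ x (p x) : ℂ).re ≤ ‖x‖ ^ 2)
    (k : ℕ) (hk : 1 ≤ k) (hkm : k ≤ m - 1) :
    Real.sqrt (∑ w, ‖a k w‖ ^ 2) ≤
      2 * (1 - a0.re) * Real.cos (Real.pi / (((m - 1) / k + 2 : ℕ) : ℝ)) := by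
  set N := (m - 1) / k with hN
  have hN1 : 1 ≤ N := (Nat.one_le_div_iff (by omega)).2 hkm
  set σ := Real.sqrt (∑ w, ‖a k w‖ ^ 2) with hσ
  have hσ2 : ∑ w, ‖a k w‖ ^ 2 = σ ^ 2 :=
    (Real.sq_sqrt (Finset.sum_nonneg fun _ _ => by positivity)).symm
  set e := fockBasis n [] with he
  have hee : inner ℂ e e = (1:ℂ) := by rw [he, fock_inner]; simp
  have hed : fdeg n 0 e := by
    intro α hα
    rw [he, fock_inner, if_neg]
    rintro rfl; simp at hα
  -- zeroth coefficient
  have hp0 : ∀ d, d ≠ 0 → inner ℂ e (hop S d (a d) e) = (0:ℂ) := by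
    intro d hd
    exact fdeg_orth n 0 (0 + d) (by omega) _ _ hed (hom_deg hS (hop_mem d _) 0 e hed)
  have hpe : inner ℂ e (p e) = a0 := by
    rw [hp, ContinuousLinearMap.sum_apply, inner_sum, Finset.sum_eq_single 0]
    · simp [hop, wordProd, inner_smul_right, hee, ha0, -inner_self_eq_norm_sq_to_K]
    · intro d _ hd; exact hp0 d hd
    · intro h; simp at h; omega
  by_cases hσ0 : σ = 0
  · rw [hσ0]
    have h1 : a0.re ≤ 1 := by
      have := hre e
      rw [hpe] at this
      have h2 : ‖e‖ ^ 2 = 1 := by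
        have h3 := inner_self_eq_norm_sq (𝕜 := ℂ) e
        rw [hee] at h3
        simpa using h3.symm
      linarith
    have hc : 0 ≤ Real.cos (Real.pi / ((N + 2 : ℕ) : ℝ)) := by
      apply Real.cos_nonneg_of_neg_pi_div_two_le_of_le
      · have : 0 ≤ Real.pi / ((N + 2 : ℕ) : ℝ) := by positivity
        linarith [Real.pi_pos]
      · apply div_le_div_of_nonneg_left Real.pi_pos.le (by norm_num)
        push_cast; linarith [(Nat.cast_nonneg N : (0:ℝ) ≤ N)]
    have : 0 ≤ 2 * (1 - a0.re) := by linarith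
    positivity
  set b : (Fin k → Fin n) → ℂ := fun w => -(a k w / σ) with hb
  set B := hop S k b with hB
  have hσc : (σ:ℂ) ≠ 0 := by exact_mod_cast hσ0
  have hsum : ∑ w, starRingEnd ℂ (a k w) * a k w = (σ:ℂ) ^ 2 := by
    rw [← Complex.ofReal_pow, ← hσ2]
    push_cast
    refine Finset.sum_congr rfl fun w _ => ?_
    rw [mul_comm, Complex.mul_conj, Complex.normSq_eq_norm_sq]; push_cast; rfl
  have hBB : ∀ x y, inner ℂ (B x) (B y) = (inner ℂ x y : ℂ) := by
    intro x y
    rw [hB, hop_adj hS]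
    have : ∑ w, starRingEnd ℂ (b w) * b w = 1 := by
      have : ∀ w, starRingEnd ℂ (b w) * b w = (starRingEnd ℂ (a k w) * a k w) / (σ:ℂ)^2 := by
        intro w
        simp only [hb, map_neg, map_div₀, Complex.conj_ofReal]
        field_simp
      rw [Finset.sum_congr rfl fun w _ => this w, ← Finset.sum_div, hsum]
      field_simp
    rw [this, one_mul]
  have hBmem : B ∈ hom S k := hop_mem k b
  set v : ℕ → Fock n := fun j => (B ^ j) e with hv
  have hvdeg : ∀ j, fdeg n (j * k) (v j) := by
    intro j
    have := hom_deg hS (hom_pow hBmem j) 0 e hed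
    rwa [zero_add] at this
  have hvs : ∀ j, v (j+1) = B (v j) := by
    intro j; simp only [hv, pow_succ', ContinuousLinearMap.mul_apply]
  have hvn : ∀ j, inner ℂ (v j) (v j) = (1:ℂ) := by
    intro j
    induction j with
    | zero => simpa [hv] using hee
    | succ j ih => rw [hvs, hBB, ih]
  have hvo : ∀ i j, inner ℂ (v i) (v j) = if i = j then (1:ℂ) else 0 := by
    intro i j
    split_ifs with h
    · rw [h, hvn]
    · refine fdeg_orth n (i * k) (j * k) ?_ _ _ (hvdeg i) (hvdeg j)
      intro h'; exact h (Nat.eq_of_mul_eq_mul_right (by omega) h')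
  have hzero : ∀ d i j, d + j * k ≠ i * k → inner ℂ (v i) (hop S d (a d) (v j)) = (0:ℂ) := by
    intro d i j h
    exact fdeg_orth n (i * k) (j * k + d) (by omega) _ _ (hvdeg i)
      (hom_deg hS (hop_mem d _) _ _ (hvdeg j))
  set A : ℕ → ℂ := fun s => inner ℂ (v s) (p (v 0)) with hA
  have hpsum : ∀ i j, inner ℂ (v i) (p (v j)) =
      ∑ d ∈ Finset.range m, (inner ℂ (v i) (hop S d (a d) (v j)) : ℂ) := by
    intro i j
    rw [hp, ContinuousLinearMap.sum_apply, inner_sum]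
  have hG1 : ∀ j s, inner ℂ (v (j + s)) (p (v j)) = A s := by
    intro j s
    simp only [hA]
    rw [hpsum, hpsum]
    refine Finset.sum_congr rfl fun d _ => ?_
    by_cases hd : d = s * k
    · subst hd
      obtain ⟨c, hc⟩ := hom_adj hS (hom_pow hBmem s) (hop_mem (s * k) (a (s * k)))
      have e1 : v (j + s) = (B ^ s) (v j) := by
        simp only [hv]; rw [add_comm, pow_add, ContinuousLinearMap.mul_apply]
      have e2 : v s = (B ^ s) (v 0) := by
        simp [hv]
      rw [e1, e2, hc, hc, hvn, hvn]
    · rw [hzero _ _ _ (by rw [add_mul]; omega), hzero _ _ _ (by omega)]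
  have hG2 : ∀ i j, i < j → inner ℂ (v i) (p (v j)) = (0:ℂ) := by
    intro i j hij
    rw [hpsum]
    refine Finset.sum_eq_zero fun d _ => hzero _ _ _ ?_
    have : i * k < j * k := Nat.mul_lt_mul_of_pos_right hij (by omega)
    omega
  have hA0' : ∀ s, N < s → A s = 0 := by
    intro s hs
    simp only [hA]
    rw [hpsum]
    refine Finset.sum_eq_zero fun d hd => hzero _ _ _ ?_
    have hd := Finset.mem_range.1 hd
    have : m - 1 < s * k := (Nat.div_lt_iff_lt_mul (by omega)).1 hs
    omega
  have hA0 : A 0 = a0 := by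
    simp only [hA]
    have : v 0 = e := by simp [hv]
    rw [this, hpe]
  have hA1 : A 1 = -σ := by
    simp only [hA]
    rw [hpsum, Finset.sum_eq_single k]
    · rw [hvs 0, hB, hop_adj hS, hvn]
      have : ∀ w, starRingEnd ℂ (b w) * a k w = -(starRingEnd ℂ (a k w) * a k w) / (σ:ℂ) := by
        intro w
        simp only [hb, map_neg, map_div₀, Complex.conj_ofReal]
        field_simp
      rw [Finset.sum_congr rfl fun w _ => this w, ← Finset.sum_div, Finset.sum_neg_distrib, hsum]
      field_simp
    · intro d _ hd
      exact hzero _ _ _ (by omega)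
    · intro h; simp at h; omega
  have key := fejer N hN1 A ?_
  · rw [hA0, hA1] at key
    simpa using key
  intro z hz
  apply toep_limit
  intro L hL
  rw [← toep_sum N L hL A hA0' z]
  have hzz : z * starRingEnd ℂ z = 1 := by
    rw [Complex.mul_conj, Complex.normSq_eq_norm_sq, hz]; norm_num
  set x : Fock n := ∑ j ∈ Finset.range L, (starRingEnd ℂ z) ^ j • v j with hx
  have hmain := hre x
  have hxx : inner ℂ x x = (L:ℂ) := by
    rw [hx]
    rw [inner_sum]
    simp_rw [sum_inner, inner_smul_right, inner_smul_left, hvo]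
    have : ∀ i ∈ Finset.range L, ∑ j ∈ Finset.range L, starRingEnd ℂ ((starRingEnd ℂ z) ^ j) *
        ((starRingEnd ℂ z) ^ i * if j = i then (1:ℂ) else 0) = 1 := by
      intro i hi
      rw [Finset.sum_eq_single i]
      · simp only [map_pow, Complex.conj_conj, if_true, mul_one]
        rw [← mul_pow, hzz, one_pow]
      · intro j _ h; simp [h]
      · intro h; exact absurd hi h
    refine (Finset.sum_congr rfl fun i hi => ?_).trans (b := ∑ i ∈ Finset.range L, (1:ℂ)) (by simp)
    refine Eq.trans ?_ (this i hi)
    first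
    | exact Finset.sum_congr rfl fun j _ => by ring
    | (rw [Finset.mul_sum]; exact Finset.sum_congr rfl fun j _ => by ring)
  have hxn : ‖x‖ ^ 2 = (L:ℝ) := by
    have h2 : ((‖x‖ ^ 2 : ℝ) : ℂ) = ((L:ℝ):ℂ) := by
      push_cast
      rw [← hxx, inner_self_eq_norm_sq_to_K]; rfl
    exact_mod_cast h2
  have hxp : inner ℂ x (p x) = ∑ j ∈ Finset.range L, ∑ i ∈ Finset.range L,
      (if j ≤ i then A (i - j) * z ^ (i - j) else 0) := by
    rw [hx]
    simp only [map_sum, map_smul]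
    rw [inner_sum]
    refine Finset.sum_congr rfl fun j _ => ?_
    rw [sum_inner]
    refine Finset.sum_congr rfl fun i _ => ?_
    rw [inner_smul_left, inner_smul_right]
    split_ifs with h
    · obtain ⟨s, rfl⟩ := Nat.exists_eq_add_of_le h
      rw [hG1, Nat.add_sub_cancel_left]
      simp only [map_pow, Complex.conj_conj]
      have : z ^ j * (starRingEnd ℂ z) ^ j = 1 := by rw [← mul_pow, hzz, one_pow]
      rw [pow_add]
      linear_combination (A s * z ^ s) * this
    · rw [hG2 _ _ (by omega)]; simp
  rw [hxp, hxn] at hmain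
  exact hmain

end

theorem stmt_5 (n : ℕ) (hn : 1 ≤ n) (m : ℕ) (hm : 2 ≤ m)
    (a : List (Fin n) → ℂ) (ha_im : (a []).im = 0) (ha_nonneg : 0 ≤ (a []).re)
    (S : Fin n → Fock n →L[ℂ] Fock n)
    (hS : ∀ (i : Fin n) (α : List (Fin n)), S i (fockBasis n α) = fockBasis n (i :: α))
    (p : Fock n →L[ℂ] Fock n)
    (hp : p = ∑ k ∈ Finset.range m, ∑ w : Fin k → Fin n,
      a (List.ofFn w) • wordProd S (List.ofFn w))
    (hre : (2 : ℂ)⁻¹ • (p + ContinuousLinearMap.adjoint p) ≤ 1)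
    (t : ℝ) (htm : t ∈ Set.Ioc (0 : ℝ) 1) (hts : fm m t = 1 / 2) :
    ∀ r : Fin n → ℝ, (∀ i, 0 ≤ r i) → Real.sqrt (∑ i, r i ^ 2) ≤ t →
      ∑ k ∈ Finset.range m, ∑ w : Fin k → Fin n,
        ‖a (List.ofFn w)‖ * wordProd r (List.ofFn w) ≤ 1 := by
  intro r hr hrt
  have hre' : ∀ x : Fock n, (inner ℂ x (p x) : ℂ).re ≤ ‖x‖ ^ 2 := by
    intro x
    have h := ((ContinuousLinearMap.le_def _ _).1 hre).re_inner_nonneg_right x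
    have h1 : (inner ℂ x (ContinuousLinearMap.adjoint p x) : ℂ).re = (inner ℂ x (p x) : ℂ).re := by
      rw [ContinuousLinearMap.adjoint_inner_right, ← inner_conj_symm, Complex.conj_re]
    have h2 : (inner ℂ x x : ℂ).re = ‖x‖ ^ 2 := inner_self_eq_norm_sq (𝕜 := ℂ) x
    have h3 : ((2:ℂ)⁻¹ * (inner ℂ x (p x) + inner ℂ x (ContinuousLinearMap.adjoint p x))).re =
        (inner ℂ x (p x) : ℂ).re := by
      have : (2:ℂ)⁻¹ = ((2⁻¹ : ℝ) : ℂ) := by push_cast; rfl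
      rw [this, Complex.re_ofReal_mul, Complex.add_re, h1]; ring
    rw [ContinuousLinearMap.sub_apply, ContinuousLinearMap.smul_apply,
      ContinuousLinearMap.add_apply, ContinuousLinearMap.one_apply, inner_sub_right,
      inner_smul_right, inner_add_right] at h
    have h' : 0 ≤ (inner ℂ x x : ℂ).re -
      ((2:ℂ)⁻¹ * (inner ℂ x (p x) + inner ℂ x (ContinuousLinearMap.adjoint p x))).re := h
    rw [h3, h2] at h'
    linarith
  have hb : ∀ k ∈ Finset.Icc 1 (m - 1), ∑ w : Fin k → Fin n,
      ‖a (List.ofFn w)‖ * wordProd r (List.ofFn w) ≤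
      2 * (1 - (a []).re) * (t ^ k * Real.cos (Real.pi / (((m - 1) / k + 2 : ℕ) : ℝ))) := by
    intro k hk
    obtain ⟨hk1, hk2⟩ := Finset.mem_Icc.1 hk
    have hc := coef_bound hS m (fun k w => a (List.ofFn w)) (a []) (by simp) p hp hre' k hk1 hk2
    have hw : ∑ w : Fin k → Fin n, wordProd r (List.ofFn w) ^ 2 = (∑ i, r i ^ 2) ^ k := by
      rw [Fintype.sum_pow]
      refine Finset.sum_congr rfl fun w _ => ?_
      rw [wordProd, List.map_ofFn, List.prod_ofFn, ← Finset.prod_pow]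
      rfl
    have hrk : Real.sqrt (∑ w : Fin k → Fin n, wordProd r (List.ofFn w) ^ 2) ≤ t ^ k := by
      have hnn : 0 ≤ ∑ i, r i ^ 2 := Finset.sum_nonneg fun i _ => by positivity
      have e : (∑ i, r i ^ 2) ^ k = (Real.sqrt (∑ i, r i ^ 2) ^ k) ^ 2 := by
        rw [← pow_mul, mul_comm, pow_mul, Real.sq_sqrt hnn]
      rw [hw, e, Real.sqrt_sq (by positivity)]
      exact pow_le_pow_left₀ (Real.sqrt_nonneg _) hrt k
    calc _ ≤ _ := Real.sum_mul_le_sqrt_mul_sqrt _ _ _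
      _ ≤ (2 * (1 - (a []).re) * Real.cos (Real.pi / (((m - 1) / k + 2 : ℕ) : ℝ))) * t ^ k :=
        mul_le_mul hc hrk (Real.sqrt_nonneg _) ((Real.sqrt_nonneg _).trans hc)
      _ = _ := by ring
  have hsplit : Finset.range m = insert 0 (Finset.Icc 1 (m - 1)) := by
    ext k; simp; omega
  rw [hsplit, Finset.sum_insert (by simp)]
  have h0 : ∑ w : Fin 0 → Fin n, ‖a (List.ofFn w)‖ * wordProd r (List.ofFn w) = (a []).re := by
    simp only [List.ofFn_zero, wordProd, List.map_nil, List.prod_nil, mul_one,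
      Finset.univ_unique, Finset.sum_singleton]
    have : a [] = (((a []).re : ℝ) : ℂ) := by
      apply Complex.ext <;> simp [ha_im]
    rw [this, Complex.norm_real, Real.norm_of_nonneg ha_nonneg, Complex.ofReal_re]
  rw [h0]
  have hsum := Finset.sum_le_sum hb
  rw [← Finset.mul_sum] at hsum
  have : fm m t = ∑ k ∈ Finset.Icc 1 (m - 1),
    t ^ k * Real.cos (Real.pi / (((m - 1) / k + 2 : ℕ) : ℝ)) := rfl
  rw [← this, hts] at hsum
  linarith
end

section
/- Let m ≥ 2 be an integer and let p(z) = ∑_{k=0}^{m−1} a_k z^k be a polynomial with complex coefficients such that |p(z)| ≤ 1 for all z ∈ 𝔻. Then ∑_{k=0}^{m−1} |a_k| r^k ≤ 1 for every r with 0 ≤ r ≤ t_m. -/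
open scoped BigOperators

lemma aux_cos (n j : ℕ) (hn : 0 < n) :
    Real.cos ((2 * j + 1 : ℝ) * (Real.pi / n)) ≤ Real.cos (Real.pi / n) := by
  have hn' : (0 : ℝ) < n := by exact_mod_cast hn
  obtain ⟨q, s, hs, hj⟩ : ∃ q s : ℕ, s < n ∧ j = s + q * n :=
    ⟨j / n, j % n, Nat.mod_lt _ hn, (Nat.mod_add_div' j n).symm⟩
  have hsn : ((s : ℝ) + 1) ≤ n := by exact_mod_cast hs
  have hpi := Real.pi_pos
  have e1 : Real.sin (j * (Real.pi / n)) = (-1) ^ q * Real.sin (s * (Real.pi / n)) := by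
    rw [← Real.sin_add_nat_mul_pi]
    congr 1
    rw [hj]; push_cast; field_simp
  have e2 : Real.sin ((j + 1) * (Real.pi / n)) = (-1) ^ q * Real.sin ((s + 1) * (Real.pi / n)) := by
    rw [← Real.sin_add_nat_mul_pi]
    congr 1
    rw [hj]; push_cast; field_simp; ring
  have p1 : 0 ≤ Real.sin (s * (Real.pi / n)) := by
    apply Real.sin_nonneg_of_nonneg_of_le_pi (by positivity)
    rw [mul_div_assoc', div_le_iff₀ hn']
    nlinarith
  have p2 : 0 ≤ Real.sin ((s + 1) * (Real.pi / n)) := by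
    apply Real.sin_nonneg_of_nonneg_of_le_pi (by positivity)
    rw [mul_div_assoc', div_le_iff₀ hn']
    nlinarith
  have h : Real.cos (Real.pi / n) - Real.cos ((2 * j + 1 : ℝ) * (Real.pi / n))
      = 2 * (Real.sin ((j + 1) * (Real.pi / n)) * Real.sin (j * (Real.pi / n))) := by
    rw [Real.cos_sub_cos,
      show (Real.pi / n + (2 * j + 1 : ℝ) * (Real.pi / n)) / 2 = (j + 1) * (Real.pi / n) by ring,
      show (Real.pi / n - (2 * j + 1 : ℝ) * (Real.pi / n)) / 2 = -(j * (Real.pi / n)) by ring,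
      Real.sin_neg]
    ring
  have hq : ((-1 : ℝ) ^ q) * (-1) ^ q = 1 := by rw [← mul_pow]; norm_num
  have h3 : Real.sin ((j + 1) * (Real.pi / n)) * Real.sin (j * (Real.pi / n))
      = Real.sin ((s + 1) * (Real.pi / n)) * Real.sin (s * (Real.pi / n)) := by
    rw [e1, e2]
    linear_combination (Real.sin ((s + 1) * (Real.pi / n)) * Real.sin (s * (Real.pi / n))) * hq
  have := mul_nonneg p2 p1
  linarith

/-- The quadrature nodes `exp (i π (2 j + 1) / M)`. -/
noncomputable def nodeZ (M j : ℕ) : ℂ :=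
  Complex.exp (((2 * j + 1 : ℝ) * (Real.pi / M) : ℝ) * Complex.I)

lemma nodeZ_norm (M j : ℕ) : ‖nodeZ M j‖ = 1 := Complex.norm_exp_ofReal_mul_I _

lemma nodeZ_ne (M j : ℕ) : nodeZ M j ≠ 0 := Complex.exp_ne_zero _

lemma nodeZ_sum (M : ℕ) (hM : 0 < M) (i : ℤ) (hi : i ≠ 0) (hi' : |i| < M) :
    ∑ j ∈ Finset.range M, nodeZ M j ^ i = 0 := by
  have hω := Complex.isPrimitiveRoot_exp M hM.ne'
  set ω := Complex.exp (2 * Real.pi * Complex.I / M) with hωd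
  have hz : ∀ j, nodeZ M j ^ i = nodeZ M 0 ^ i * (ω ^ i) ^ j := by
    intro j
    rw [← zpow_natCast, ← zpow_mul, mul_comm i, zpow_mul, ← mul_zpow]
    congr 1
    rw [zpow_natCast, hωd, ← Complex.exp_nat_mul, nodeZ, nodeZ, ← Complex.exp_add]
    congr 1
    push_cast
    ring
  rw [Finset.sum_congr rfl (fun j _ => hz j), ← Finset.mul_sum]
  have h1 : ω ^ i ≠ 1 := by
    rw [Ne, hω.zpow_eq_one_iff_dvd]
    intro hd
    exact hi (Int.eq_zero_of_abs_lt_dvd hd hi')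
  have h2 : (ω ^ i) ^ M = 1 := by
    rw [← zpow_natCast, ← zpow_mul, mul_comm, zpow_mul, zpow_natCast, hω.pow_eq_one, one_zpow]
  rw [geom_sum_eq h1, h2]
  simp

lemma nodeZ_re (n k j : ℕ) (hn : 0 < n) (hk : 0 < k) :
    (nodeZ (k * n) j ^ k).re ≤ Real.cos (Real.pi / n) := by
  have : nodeZ (k * n) j ^ k
      = Complex.exp (((2 * j + 1 : ℝ) * (Real.pi / n) : ℝ) * Complex.I) := by
    rw [nodeZ, ← Complex.exp_nat_mul]
    congr 1
    have : (k : ℂ) ≠ 0 := by exact_mod_cast hk.ne'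
    have : (n : ℂ) ≠ 0 := by exact_mod_cast hn.ne'
    push_cast
    field_simp
  rw [this, Complex.exp_ofReal_mul_I_re]
  exact aux_cos n j hn

lemma key (m k : ℕ) (hk : 1 ≤ k) (hkm : k ≤ m - 1) (b : ℕ → ℂ)
    (hb : ∀ z : ℂ, ‖z‖ = 1 → 0 ≤ (∑ l ∈ Finset.range m, b l * z ^ l).re) :
    (b k).re ≤ 2 * Real.cos (Real.pi / (((m - 1) / k + 2 : ℕ) : ℝ)) * (b 0).re := by
  set n := (m - 1) / k + 2 with hn
  set c := Real.cos (Real.pi / (n : ℝ)) with hc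
  set M := k * n with hMd
  have hMm : m + k ≤ M := by
    have h1 := Nat.div_add_mod (m - 1) k
    have h2 := Nat.mod_lt (m - 1) hk
    have h3 : M = k * ((m - 1) / k) + k * 2 := by rw [hMd, hn, mul_add]
    omega
  have hM : 0 < M := by omega
  have hw : ∀ j, 0 ≤ c - (nodeZ M j ^ k).re := fun j =>
    sub_nonneg.2 (nodeZ_re n k j (Nat.succ_pos _) hk)
  have hpos : 0 ≤ (∑ j ∈ Finset.range M, (((c - (nodeZ M j ^ k).re : ℝ)) : ℂ) *
      ∑ l ∈ Finset.range m, b l * nodeZ M j ^ l).re := by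
    rw [Complex.re_sum]
    refine Finset.sum_nonneg fun j _ => ?_
    rw [Complex.re_ofReal_mul]
    exact mul_nonneg (hw j) (hb _ (nodeZ_norm M j))
  have hre : ∀ j, (((nodeZ M j ^ k).re : ℝ) : ℂ)
      = (nodeZ M j ^ (k : ℤ) + nodeZ M j ^ (-(k : ℤ))) / 2 := by
    intro j
    rw [Complex.re_eq_add_conj, map_pow, ← Complex.inv_eq_conj (nodeZ_norm M j), zpow_neg,
      zpow_natCast, inv_pow]
  have hS : ∀ i : ℤ, |i| < M →
      ∑ j ∈ Finset.range M, nodeZ M j ^ i = if i = 0 then (M : ℂ) else 0 := by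
    intro i hi
    split_ifs with h
    · simp [h]
    · exact nodeZ_sum M hM i h hi
  have heq : (∑ j ∈ Finset.range M, (((c - (nodeZ M j ^ k).re : ℝ)) : ℂ) *
      ∑ l ∈ Finset.range m, b l * nodeZ M j ^ l) = M * (c * b 0 - b k / 2) := by
    have hterm : ∀ j l, (((c - (nodeZ M j ^ k).re : ℝ)) : ℂ) * (b l * nodeZ M j ^ l)
        = b l * (c * nodeZ M j ^ (l : ℤ) - nodeZ M j ^ ((l : ℤ) + k) / 2
            - nodeZ M j ^ ((l : ℤ) - k) / 2) := by
      intro j l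
      rw [Complex.ofReal_sub, hre, sub_eq_add_neg (l : ℤ), zpow_add₀ (nodeZ_ne M j),
        zpow_add₀ (nodeZ_ne M j), zpow_natCast _ l]
      ring
    simp_rw [Finset.mul_sum, hterm]
    rw [Finset.sum_comm]
    have hl : ∀ l ∈ Finset.range m, ∑ j ∈ Finset.range M,
        b l * (c * nodeZ M j ^ (l : ℤ) - nodeZ M j ^ ((l : ℤ) + k) / 2
            - nodeZ M j ^ ((l : ℤ) - k) / 2)
        = (if l = 0 then M * c * b 0 else 0) - (if l = k then M * b k / 2 else 0) := by
      intro l hl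
      have hlm := Finset.mem_range.1 hl
      rw [← Finset.mul_sum, Finset.sum_sub_distrib, Finset.sum_sub_distrib, ← Finset.mul_sum,
        ← Finset.sum_div, ← Finset.sum_div, hS _ (by rw [abs_lt]; omega),
        hS _ (by rw [abs_lt]; omega), hS _ (by rw [abs_lt]; omega)]
      rw [if_neg (show ¬ ((l : ℤ) + k = 0) by omega)]
      by_cases h0 : l = 0
      · subst h0
        rw [if_pos (by simp), if_neg (by omega), if_pos rfl, if_neg (by omega)]
        ring
      · by_cases h1 : l = k
        · subst h1
          rw [if_neg (by omega), if_pos (by omega), if_neg h0, if_pos rfl]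
          ring
        · rw [if_neg (by omega), if_neg (by omega), if_neg h0, if_neg h1]
          ring
    rw [Finset.sum_congr rfl hl, Finset.sum_sub_distrib, Finset.sum_ite_eq', Finset.sum_ite_eq',
      if_pos (Finset.mem_range.2 (by omega)), if_pos (Finset.mem_range.2 (by omega))]
    ring
  rw [heq] at hpos
  have h5 : ((M : ℂ) * (c * b 0 - b k / 2)).re = M * (c * (b 0).re - (b k).re / 2) := by
    rw [show (M : ℂ) = ((M : ℝ) : ℂ) by simp, Complex.re_ofReal_mul, Complex.sub_re,
      Complex.re_ofReal_mul, show b k / 2 = b k / ((2 : ℝ) : ℂ) by simp, Complex.div_ofReal_re]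
  rw [h5] at hpos
  have := nonneg_of_mul_nonneg_right hpos (by exact_mod_cast hM : (0 : ℝ) < M)
  linarith

lemma exists_rot (w : ℂ) : ∃ u : ℂ, ‖u‖ = 1 ∧ u * w = ‖w‖ := by
  by_cases h : w = 0
  · exact ⟨1, by simp, by simp [h]⟩
  · have hn : (‖w‖ : ℂ) ≠ 0 := by simpa using h
    refine ⟨‖w‖ / w, ?_, ?_⟩
    · rw [norm_div]; simp [h]
    · field_simp

lemma exists_root (u : ℂ) (hu : ‖u‖ = 1) (k : ℕ) (hk : 1 ≤ k) : ∃ v : ℂ, ‖v‖ = 1 ∧ v ^ k = u := by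
  obtain ⟨v, hv⟩ := IsAlgClosed.exists_pow_nat_eq u hk
  refine ⟨v, ?_, hv⟩
  have : ‖v‖ ^ k = 1 := by rw [← norm_pow, hv, hu]
  exact (pow_eq_one_iff_of_nonneg (norm_nonneg _) (by omega)).1 this

lemma coeff_bound (m k : ℕ) (hk : 1 ≤ k) (hkm : k ≤ m - 1) (a : ℕ → ℂ)
    (ha : ∀ z : ℂ, ‖z‖ = 1 → ‖∑ l ∈ Finset.range m, a l * z ^ l‖ ≤ 1) :
    ‖a k‖ ≤ 2 * Real.cos (Real.pi / (((m - 1) / k + 2 : ℕ) : ℝ)) * (1 - ‖a 0‖) := by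
  obtain ⟨u, hu, hu0⟩ := exists_rot (a 0)
  obtain ⟨w, hw, hwk⟩ := exists_rot (-(u * a k))
  obtain ⟨v, hv, hvk⟩ := exists_root w hw k hk
  have h := key m k hk hkm (fun l => (if l = 0 then 1 else 0) - u * a l * v ^ l) ?_
  · have e0 : ((if (0 : ℕ) = 0 then (1 : ℂ) else 0) - u * a 0 * v ^ 0).re = 1 - ‖a 0‖ := by
      simp [hu0]
    have ek : ((if k = 0 then (1 : ℂ) else 0) - u * a k * v ^ k).re = ‖a k‖ := by
      rw [if_neg (by omega), hvk, show (0 : ℂ) - u * a k * w = w * (-(u * a k)) by ring, hwk]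
      simp [hu]
    rw [← e0, ← ek]
    exact h
  · intro z hz
    have e : ∑ l ∈ Finset.range m, ((if l = 0 then (1 : ℂ) else 0) - u * a l * v ^ l) * z ^ l
        = 1 - u * ∑ l ∈ Finset.range m, a l * (v * z) ^ l := by
      simp_rw [sub_mul, Finset.sum_sub_distrib, ite_mul, zero_mul]
      rw [Finset.sum_ite_eq', if_pos (Finset.mem_range.2 (by omega)), Finset.mul_sum]
      simp only [pow_zero, mul_one]
      congr 1
      refine Finset.sum_congr rfl fun l _ => ?_
      rw [mul_pow]; ring
    have hb := ha (v * z) (by rw [norm_mul, hv, hz, one_mul])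
    rw [e, Complex.sub_re, Complex.one_re]
    have := Complex.re_le_norm (u * ∑ l ∈ Finset.range m, a l * (v * z) ^ l)
    rw [norm_mul, hu, one_mul] at this
    linarith

theorem stmt_9 (m : ℕ) (hm : 2 ≤ m) (a : ℕ → ℂ)
    (hbd : ∀ z ∈ Metric.ball (0 : ℂ) 1, ‖∑ k ∈ Finset.range m, a k * z ^ k‖ ≤ 1)
    (t : ℝ) (htm : t ∈ Set.Ioc (0 : ℝ) 1) (hts : fm m t = 1 / 2) :
    ∀ r : ℝ, 0 ≤ r → r ≤ t →
      ∑ k ∈ Finset.range m, ‖a k‖ * r ^ k ≤ 1 := by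
  intro r hr hrt
  have hcl : ∀ z : ℂ, ‖z‖ = 1 → ‖∑ l ∈ Finset.range m, a l * z ^ l‖ ≤ 1 := by
    intro z hz
    have hz' : z ∈ closure (Metric.ball (0 : ℂ) 1) := by
      rw [closure_ball _ one_ne_zero]; simp [hz]
    exact le_on_closure (f := fun z : ℂ => ‖∑ l ∈ Finset.range m, a l * z ^ l‖)
      (g := fun _ => (1 : ℝ)) hbd (by fun_prop) (by fun_prop) hz'
  have hr1 : Finset.range m = insert 0 (Finset.Icc 1 (m - 1)) := by
    ext x; simp only [Finset.mem_range, Finset.mem_insert, Finset.mem_Icc]; omega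
  rw [hr1, Finset.sum_insert (by simp)]
  have hle : ∑ k ∈ Finset.Icc 1 (m - 1), ‖a k‖ * r ^ k ≤ 2 * (1 - ‖a 0‖) * fm m t := by
    rw [fm, Finset.mul_sum]
    refine Finset.sum_le_sum fun k hk => ?_
    have hk' := Finset.mem_Icc.1 hk
    calc ‖a k‖ * r ^ k ≤ ‖a k‖ * t ^ k := by gcongr
      _ ≤ (2 * Real.cos (Real.pi / (((m - 1) / k + 2 : ℕ) : ℝ)) * (1 - ‖a 0‖)) * t ^ k := by
        have ht := htm.1.le
        gcongr
        exact coeff_bound m k hk'.1 hk'.2 a hcl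
      _ = _ := by ring
  rw [hts] at hle
  simp only [pow_zero, mul_one]
  linarith
end
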